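/- arXiv:1108.2568 — 6 statements merged into one kernel-verified Lean document; each statement's English description precedes it below -/
import Mathlib

section
/- Let n, n_u, n_ζ, l be positive integers, A an n×n real matrix, B an n×n_u real matrix, and for each j = 1,…,l let C_j be an n×n_ζ real matrix, K_j an n_q×n real matrix and G_j an n_q×n_u real matrix. Let Q (n×n) and R (n_u×n_u) be symmetric positive definite, let τ_1,…,τ_l > 0, and define E = R + Σ_j τ_j G_jᵀG_j, Υ = Σ_j τ_j K_jᵀG_j, S = Q + Σ_j τ_j K_jᵀK_j, M = Σ_j (1/τ_j) C_jC_jᵀ. Suppose X is a symmetric positive definite n×n matrix solving the game-type algebraic Riccati equation (A − B E⁻¹ Υᵀ)ᵀX + X(A − B E⁻¹ Υᵀ) + X(M − B E⁻¹ Bᵀ)X + (S − Υ E⁻¹ Υᵀ) = 0, and set G_τ = E⁻¹(BᵀX + Υᵀ). Let d_1,…,d_l be symmetric positive definite n×n matrices. Suppose x : [0,∞) → ℝⁿ is differentiable and ζ_j : [0,∞) → ℝ^{n_ζ} are continuous, and with the feedback control u(t) = −G_τ x(t) the closed loop satisfies ẋ(t) = A x(t) + B u(t) + Σ_j C_j ζ_j(t)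 for all t ≥ 0; set z_j(t) = K_j x(t) + G_j u(t). Assume that for each j the function t ↦ ‖z_j(t)‖² − ‖ζ_j(t)‖² is integrable on [0,∞) and satisfies the integral quadratic constraint ∫₀^∞ (‖z_j(t)‖² − ‖ζ_j(t)‖²) dt ≥ −x(0)ᵀ d_j x(0), and that t ↦ x(t)ᵀQ x(t) + u(t)ᵀR u(t) is integrable on [0,∞). Then the guaranteed cost bound ∫₀^∞ (x(t)ᵀQ x(t) + u(t)ᵀR u(t)) dt ≤ x(0)ᵀ X x(0) + Σ_{j=1}^l τ_j · x(0)ᵀ d_j x(0) holds. -/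
open Matrix MeasureTheory

/-!
With `V t = x(t)ᵀ X x(t)`, completing squares in `u` and in each `ζ_j` and using the Riccati
equation gives the pointwise dissipation inequality
`V' + xᵀQx + uᵀRu + ∑ τ_j (‖z_j‖² - ‖ζ_j‖²) ≤ 0` (`dissipation`).
Integrating over `[0, T]`, discarding `V T ≥ 0` and letting `T → ∞` gives
`∫ (xᵀQx + uᵀRu) + ∑ τ_j ∫ (‖z_j‖² - ‖ζ_j‖²) ≤ V 0` (`integral_le_of_dissipation`),
and the integral quadratic constraints bound the second term below by `-∑ τ_j x(0)ᵀ d_j x(0)`.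
-/

lemma dot_transpose_mulVec {m k : ℕ} (P : Matrix (Fin m) (Fin k) ℝ) (a : Fin k → ℝ)
    (b : Fin m → ℝ) : a ⬝ᵥ Pᵀ *ᵥ b = (P *ᵥ a) ⬝ᵥ b := by
  rw [dotProduct_mulVec, vecMul_transpose]

lemma dot_mulVec_eq {m k : ℕ} (P : Matrix (Fin m) (Fin k) ℝ) (a : Fin m → ℝ)
    (b : Fin k → ℝ) : a ⬝ᵥ P *ᵥ b = (Pᵀ *ᵥ a) ⬝ᵥ b := by
  rw [dotProduct_mulVec, mulVec_transpose]

/-- Completion of the square in one uncertainty input, with `a = Cᵀ X x`. -/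
lemma two_dot_sub_le {m : ℕ} (a b : Fin m → ℝ) {s : ℝ} (hs : 0 < s) :
    2 * (a ⬝ᵥ b) - s * (b ⬝ᵥ b) ≤ s⁻¹ * (a ⬝ᵥ a) := by
  simp only [dotProduct, Finset.mul_sum, ← Finset.sum_sub_distrib]
  refine Finset.sum_le_sum fun i _ => ?_
  have h : s⁻¹ * (a i * a i) - (2 * (a i * b i) - s * (b i * b i))
      = s⁻¹ * (a i - s * b i) ^ 2 := by
    field_simp
    ring
  have : 0 ≤ s⁻¹ * (a i - s * b i) ^ 2 := by positivity
  linarith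

/-- The dissipation inequality at a fixed state `x` and disturbance `ζ`. The first summand is the
derivative of `xᵀ X x` along the closed loop. -/
lemma dissipation {n nu nζ nq l : ℕ}
    (A : Matrix (Fin n) (Fin n) ℝ) (B : Matrix (Fin n) (Fin nu) ℝ)
    (C : Fin l → Matrix (Fin n) (Fin nζ) ℝ)
    (K : Fin l → Matrix (Fin nq) (Fin n) ℝ)
    (G : Fin l → Matrix (Fin nq) (Fin nu) ℝ)
    (Q : Matrix (Fin n) (Fin n) ℝ) (R : Matrix (Fin nu) (Fin nu) ℝ)
    (hR : R.PosDef) (τ : Fin l → ℝ) (hτ : ∀ j, 0 < τ j)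
    (E : Matrix (Fin nu) (Fin nu) ℝ) (hE : E = R + ∑ j, τ j • ((G j)ᵀ * G j))
    (Υ : Matrix (Fin n) (Fin nu) ℝ) (hΥ : Υ = ∑ j, τ j • ((K j)ᵀ * G j))
    (S : Matrix (Fin n) (Fin n) ℝ) (hS : S = Q + ∑ j, τ j • ((K j)ᵀ * K j))
    (M : Matrix (Fin n) (Fin n) ℝ) (hM : M = ∑ j, (τ j)⁻¹ • (C j * (C j)ᵀ))
    (X : Matrix (Fin n) (Fin n) ℝ) (hXsymm : X.IsSymm)
    (hRic : (A - B * E⁻¹ * Υᵀ)ᵀ * X + X * (A - B * E⁻¹ * Υᵀ)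
        + X * (M - B * E⁻¹ * Bᵀ) * X + (S - Υ * E⁻¹ * Υᵀ) = 0)
    (x : Fin n → ℝ) (ζ : Fin l → Fin nζ → ℝ)
    (u : Fin nu → ℝ) (hu : u = -((E⁻¹ * (Bᵀ * X + Υᵀ)) *ᵥ x)) :
    2 * ((X *ᵥ x) ⬝ᵥ (A *ᵥ x + B *ᵥ u + ∑ j, C j *ᵥ ζ j))
      + (x ⬝ᵥ Q *ᵥ x + u ⬝ᵥ R *ᵥ u)
      + ∑ j, τ j * ((K j *ᵥ x + G j *ᵥ u) ⬝ᵥ (K j *ᵥ x + G j *ᵥ u) - ζ j ⬝ᵥ ζ j) ≤ 0 := by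
  have hEpd : E.PosDef := by
    rw [hE]
    refine hR.add_posSemidef (Matrix.posSemidef_sum _ fun j _ => ?_)
    have := (Matrix.posSemidef_conjTranspose_mul_self (G j)).smul (hτ j).le
    simpa [conjTranspose_eq_transpose_of_trivial] using this
  have hEsymm : Eᵀ = E := by
    simpa [conjTranspose_eq_transpose_of_trivial] using hEpd.isHermitian.eq
  have hdet : IsUnit E.det := (Matrix.isUnit_iff_isUnit_det _).1 hEpd.isUnit
  have hXt : Xᵀ = X := hXsymm
  set w := X *ᵥ x with hw
  set v := Bᵀ *ᵥ w + Υᵀ *ᵥ x with hv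
  have hu' : u = -(E⁻¹ *ᵥ v) := by
    rw [hu, ← mulVec_mulVec, add_mulVec, ← mulVec_mulVec]
  have hEu : E *ᵥ u = -v := by
    rw [hu', mulVec_neg, mulVec_mulVec, Matrix.mul_nonsing_inv _ hdet, one_mulVec]
  -- the Riccati equation as an identity of quadratic forms
  have hric : 2 * (w ⬝ᵥ A *ᵥ x) + w ⬝ᵥ M *ᵥ w + x ⬝ᵥ S *ᵥ x - v ⬝ᵥ E⁻¹ *ᵥ v = 0 := by
    have hEi : (E⁻¹)ᵀ = E⁻¹ := by rw [transpose_nonsing_inv, hEsymm]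
    have hXx : ∀ y, x ⬝ᵥ X *ᵥ y = w ⬝ᵥ y := fun y => by
      rw [dotProduct_mulVec, ← mulVec_transpose, hXt]
    have h := congrArg (fun P => x ⬝ᵥ P *ᵥ x) hRic
    simp only [add_mulVec, sub_mulVec, ← mulVec_mulVec, zero_mulVec, dotProduct_zero,
      dotProduct_add, dotProduct_sub, dot_transpose_mulVec, hXx, mulVec_sub, sub_dotProduct,
      ← hw] at h
    have hcomm : ∀ a b : Fin nu → ℝ, a ⬝ᵥ E⁻¹ *ᵥ b = b ⬝ᵥ E⁻¹ *ᵥ a := fun a b => by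
      rw [dotProduct_mulVec, ← mulVec_transpose, hEi, dotProduct_comm]
    rw [dotProduct_comm (A *ᵥ x) w, dotProduct_comm (B *ᵥ _) w] at h
    simp only [dot_mulVec_eq B, dot_mulVec_eq Υ] at h
    simp only [hv, mulVec_add, dotProduct_add, add_dotProduct]
    have := hcomm (Υᵀ *ᵥ x) (Bᵀ *ᵥ w)
    linarith
  have hz : ∑ j, τ j * ((K j *ᵥ x + G j *ᵥ u) ⬝ᵥ (K j *ᵥ x + G j *ᵥ u))
      + (x ⬝ᵥ Q *ᵥ x + u ⬝ᵥ R *ᵥ u) = x ⬝ᵥ S *ᵥ x + 2 * (x ⬝ᵥ Υ *ᵥ u) + u ⬝ᵥ E *ᵥ u := by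
    rw [hS, hΥ, hE]
    simp only [add_mulVec, sum_mulVec, smul_mulVec, dotProduct_add, dotProduct_sum,
      dotProduct_smul, ← mulVec_mulVec, dot_transpose_mulVec, add_dotProduct, smul_eq_mul]
    have : ∀ j, (G j *ᵥ u) ⬝ᵥ (K j *ᵥ x) = (K j *ᵥ x) ⬝ᵥ (G j *ᵥ u) :=
      fun j => dotProduct_comm _ _
    simp only [this, mul_add, Finset.sum_add_distrib]
    ring
  have hζ : ∑ j, (2 * (w ⬝ᵥ C j *ᵥ ζ j) - τ j * (ζ j ⬝ᵥ ζ j)) ≤ w ⬝ᵥ M *ᵥ w := by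
    rw [hM]
    simp only [sum_mulVec, smul_mulVec, dotProduct_sum, dotProduct_smul, smul_eq_mul]
    refine Finset.sum_le_sum fun j _ => ?_
    rw [← mulVec_mulVec, dot_mulVec_eq (C j), dot_mulVec_eq (C j)]
    exact two_dot_sub_le ((C j)ᵀ *ᵥ w) (ζ j) (hτ j)
  -- the terms containing `u` collapse because `E u = -v`
  have hq : 2 * (w ⬝ᵥ B *ᵥ u) + 2 * (x ⬝ᵥ Υ *ᵥ u) + u ⬝ᵥ E *ᵥ u = -(v ⬝ᵥ E⁻¹ *ᵥ v) := by
    have h1 : w ⬝ᵥ B *ᵥ u + x ⬝ᵥ Υ *ᵥ u = v ⬝ᵥ u := by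
      rw [hv, add_dotProduct, dot_mulVec_eq B, dot_mulVec_eq Υ]
    have h2 : v ⬝ᵥ u = -(v ⬝ᵥ E⁻¹ *ᵥ v) := by rw [hu', dotProduct_neg]
    rw [hEu, dotProduct_neg, dotProduct_comm u v]
    linarith
  simp only [dotProduct_add, dotProduct_sum, mul_sub, Finset.sum_sub_distrib] at hζ hz ⊢
  rw [← Finset.mul_sum] at hζ
  linarith

lemma hasDerivAt_quadForm {n : ℕ} (X : Matrix (Fin n) (Fin n) ℝ) (hX : X.IsSymm)
    {x : ℝ → Fin n → ℝ} {x' : Fin n → ℝ} {t : ℝ} (h : HasDerivAt x x' t) :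
    HasDerivAt (fun s => x s ⬝ᵥ X *ᵥ x s) (2 * ((X *ᵥ x t) ⬝ᵥ x')) t := by
  have hc := hasDerivAt_pi.1 h
  have hX' : Xᵀ = X := hX
  have hm : ∀ i, HasDerivAt (fun s => (X *ᵥ x s) i) ((X *ᵥ x') i) t := fun i => by
    simp only [mulVec, dotProduct]
    exact HasDerivAt.fun_sum fun k _ => (hc k).const_mul _
  have hs : HasDerivAt (fun s => x s ⬝ᵥ X *ᵥ x s) (x' ⬝ᵥ X *ᵥ x t + x t ⬝ᵥ X *ᵥ x') t := by
    have := HasDerivAt.fun_sum (u := Finset.univ) fun i _ => (hc i).fun_mul (hm i)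
    simpa only [dotProduct, Finset.sum_add_distrib] using this
  convert hs using 1
  rw [dotProduct_mulVec (x t), ← mulVec_transpose, hX', dotProduct_comm x']
  ring

/-- A nonnegative storage function `V` with `V' + f ≤ 0` bounds the total supply `∫ f` by `V 0`. -/
lemma integral_le_of_dissipation {V V' f : ℝ → ℝ}
    (hV : ∀ t, 0 ≤ t → HasDerivAt V (V' t) t) (hpos : ∀ t, 0 ≤ V t)
    (hf : IntegrableOn f (Set.Ici 0)) (hle : ∀ t, 0 ≤ t → V' t + f t ≤ 0) :
    ∫ t in Set.Ici (0 : ℝ), f t ≤ V 0 := by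
  rw [integral_Ici_eq_integral_Ioi]
  refine le_of_tendsto (intervalIntegral_tendsto_integral_Ioi 0
    (hf.mono_set Set.Ioi_subset_Ici_self) Filter.tendsto_id) ?_
  filter_upwards [Filter.eventually_ge_atTop (0 : ℝ)] with T hT
  have h := intervalIntegral.sub_le_integral_of_hasDeriv_right_of_le (g := V) (g' := V')
    (φ := fun t => -f t) hT
    (fun t ht => (hV t ht.1).continuousAt.continuousWithinAt)
    (fun t ht => (hV t ht.1.le).hasDerivWithinAt)
    (hf.mono_set Set.Icc_subset_Ici_self).neg
    (fun t ht => by have := hle t ht.1.le; linarith)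
  rw [intervalIntegral.integral_neg] at h
  have := hpos T
  simp only [id]
  linarith

/-- Guaranteed cost bound for the minimax LQR controller `u = -Gτ x` for the uncertain
linear system `ẋ = A x + B u + Σ_j C_j ζ_j` under integral quadratic constraints. -/
theorem minimax_lqr_guaranteed_cost
    (n nu nζ nq l : ℕ) (hn : 0 < n) (hnu : 0 < nu) (hnζ : 0 < nζ) (hl : 0 < l)
    (A : Matrix (Fin n) (Fin n) ℝ) (B : Matrix (Fin n) (Fin nu) ℝ)
    (C : Fin l → Matrix (Fin n) (Fin nζ) ℝ)
    (K : Fin l → Matrix (Fin nq) (Fin n) ℝ)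
    (G : Fin l → Matrix (Fin nq) (Fin nu) ℝ)
    (Q : Matrix (Fin n) (Fin n) ℝ) (R : Matrix (Fin nu) (Fin nu) ℝ)
    (hQsymm : Q.IsSymm) (hQ : Q.PosDef) (hRsymm : R.IsSymm) (hR : R.PosDef)
    (τ : Fin l → ℝ) (hτ : ∀ j, 0 < τ j)
    (E : Matrix (Fin nu) (Fin nu) ℝ) (hE : E = R + ∑ j, τ j • ((G j)ᵀ * G j))
    (Υ : Matrix (Fin n) (Fin nu) ℝ) (hΥ : Υ = ∑ j, τ j • ((K j)ᵀ * G j))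
    (S : Matrix (Fin n) (Fin n) ℝ) (hS : S = Q + ∑ j, τ j • ((K j)ᵀ * K j))
    (M : Matrix (Fin n) (Fin n) ℝ) (hM : M = ∑ j, (τ j)⁻¹ • (C j * (C j)ᵀ))
    (X : Matrix (Fin n) (Fin n) ℝ) (hXsymm : X.IsSymm) (hX : X.PosDef)
    (hRic : (A - B * E⁻¹ * Υᵀ)ᵀ * X + X * (A - B * E⁻¹ * Υᵀ)
        + X * (M - B * E⁻¹ * Bᵀ) * X + (S - Υ * E⁻¹ * Υᵀ) = 0)
    (Gτ : Matrix (Fin nu) (Fin n) ℝ) (hGτ : Gτ = E⁻¹ * (Bᵀ * X + Υᵀ))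
    (d : Fin l → Matrix (Fin n) (Fin n) ℝ)
    (hdsymm : ∀ j, (d j).IsSymm) (hd : ∀ j, (d j).PosDef)
    (x : ℝ → Fin n → ℝ) (ζ : Fin l → ℝ → Fin nζ → ℝ)
    (hζ : ∀ j, ContinuousOn (ζ j) (Set.Ici (0:ℝ)))
    (u : ℝ → Fin nu → ℝ) (hu : ∀ t, u t = -(Gτ.mulVec (x t)))
    (hdyn : ∀ t, 0 ≤ t → HasDerivAt x
        (A.mulVec (x t) + B.mulVec (u t) + ∑ j, (C j).mulVec (ζ j t)) t)
    (z : Fin l → ℝ → Fin nq → ℝ)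
    (hz : ∀ j t, z j t = (K j).mulVec (x t) + (G j).mulVec (u t))
    (hIQCint : ∀ j, IntegrableOn
        (fun t => (∑ i, (z j t i) ^ 2) - ∑ i, (ζ j t i) ^ 2) (Set.Ici (0:ℝ)))
    (hIQC : ∀ j, ∫ t in Set.Ici (0:ℝ),
        ((∑ i, (z j t i) ^ 2) - ∑ i, (ζ j t i) ^ 2)
        ≥ -(x 0 ⬝ᵥ (d j).mulVec (x 0)))
    (hcostint : IntegrableOn
        (fun t => x t ⬝ᵥ Q.mulVec (x t) + u t ⬝ᵥ R.mulVec (u t)) (Set.Ici (0:ℝ))) :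
    (∫ t in Set.Ici (0:ℝ), (x t ⬝ᵥ Q.mulVec (x t) + u t ⬝ᵥ R.mulVec (u t)))
      ≤ x 0 ⬝ᵥ X.mulVec (x 0) + ∑ j, τ j * (x 0 ⬝ᵥ (d j).mulVec (x 0)) := by
  -- the total supply: running cost plus the weighted constraint integrands
  have hint : ∀ j ∈ (Finset.univ : Finset (Fin l)), IntegrableOn
      (fun t => τ j * ((∑ i, (z j t i) ^ 2) - ∑ i, (ζ j t i) ^ 2)) (Set.Ici (0:ℝ)) :=
    fun j _ => (hIQCint j).const_mul (τ j)
  have hsum : IntegrableOn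
      (fun t => ∑ j, τ j * ((∑ i, (z j t i) ^ 2) - ∑ i, (ζ j t i) ^ 2)) (Set.Ici (0:ℝ)) :=
    integrable_finsetSum _ hint
  have key := integral_le_of_dissipation
    (fun t ht => hasDerivAt_quadForm X hXsymm (hdyn t ht))
    (fun t => by simpa using hX.posSemidef.dotProduct_mulVec_nonneg (x t))
    (hcostint.add hsum)
    (fun t _ => by
      have h := dissipation A B C K G Q R hR τ hτ E hE Υ hΥ S hS M hM X hXsymm hRic (x t)
        (fun j => ζ j t) (u t) (by rw [hu t, hGτ])
      simp only [← hz] at h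
      simp only [dotProduct, ← pow_two, Pi.add_apply] at h ⊢
      linarith)
  simp only [Pi.add_apply] at key
  rw [integral_add hcostint hsum, integral_finsetSum _ hint] at key
  simp only [integral_const_mul] at key
  have hlow : -∑ j, τ j * (x 0 ⬝ᵥ (d j).mulVec (x 0)) ≤ ∑ j, τ j *
      ∫ t in Set.Ici (0:ℝ), ((∑ i, (z j t i) ^ 2) - ∑ i, (ζ j t i) ^ 2) := by
    rw [← Finset.sum_neg_distrib]
    refine Finset.sum_le_sum fun j _ => ?_
    rw [← mul_neg]
    exact mul_le_mul_of_nonneg_left (hIQC j) (hτ j).le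
  linarith
end

section
/- Let n, n_u, n_ζ, l be positive integers, A an n×n real matrix, B an n×n_u real matrix, and for each j = 1,…,l let C_j be an n×n_ζ real matrix, K_j an n_q×n real matrix and G_j an n_q×n_u real matrix. Let Q (n×n) and R (n_u×n_u) be symmetric positive definite, let τ_1,…,τ_l > 0, and define E = R + Σ_j τ_j G_jᵀG_j, Υ = Σ_j τ_j K_jᵀG_j, S = Q + Σ_j τ_j K_jᵀK_j, M = Σ_j (1/τ_j) C_jC_jᵀ. Suppose X is a symmetric n×n matrix solving (A − B E⁻¹ Υᵀ)ᵀX + X(A − B E⁻¹ Υᵀ) + X(M − B E⁻¹ Bᵀ)X + (S − Υ E⁻¹ Υᵀ) = 0, and set G_τ = E⁻¹(BᵀX + Υᵀ). Suppose x : [0,∞) → ℝⁿ is differentiable, ζ_j : [0,∞) → ℝ^{n_ζ} are continuous, u(t) = −G_τ x(t), and ẋ(t) = A x(t) + B u(t) + Σ_j C_j ζ_j(t) for all t ≥ 0; set z_j(t) = K_j x(t) + G_j u(t). Then for every T ≥ 0, ∫₀^T (x(t)ᵀQ x(t) + u(t)ᵀR u(t)) dt + Σ_{j=1}^l τ_j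 ∫₀^T (‖z_j(t)‖² − ‖ζ_j(t)‖²) dt ≤ x(0)ᵀ X x(0) − x(T)ᵀ X x(T). -/
open Matrix MeasureTheory

/-!
Along a closed-loop trajectory, the derivative of `V(x) = xᵀXx` plus the integrand of the
left-hand side is nonpositive at every time; integrating over `[0, T]` gives the claim.

For the pointwise inequality put `y = Xx` and `w = Gτ x`, so that `E w = Bᵀy + Υᵀx` and `u = -w`.
Expanding `‖z_j‖²` collects the quadratic terms in `x` and `u` into `xᵀSx + 2xᵀΥu + uᵀEu`
(`running_cost_eq`), which together with `2yᵀBu` equals `xᵀSx - wᵀEw`. Completing the square in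
each `ζ_j` bounds the disturbance terms by `yᵀMy` (`disturbance_le`). What remains is the Riccati
equation evaluated at `x` (`riccati_quadratic_form`), which is zero.
-/

lemma dotProduct_transpose_mulVec_eq {m k : ℕ} (P : Matrix (Fin m) (Fin k) ℝ)
    (a : Fin k → ℝ) (b : Fin m → ℝ) : a ⬝ᵥ (Pᵀ *ᵥ b) = (P *ᵥ a) ⬝ᵥ b := by
  rw [mulVec_transpose, dotProduct_comm, ← dotProduct_mulVec, dotProduct_comm]

lemma sum_sq_eq_dotProduct {m : ℕ} (a : Fin m → ℝ) : ∑ i, (a i) ^ 2 = a ⬝ᵥ a := by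
  simp [dotProduct, sq]

/-- A weighted sum of Gram-type products acts on vectors as the weighted sum of dot products. -/
lemma dotProduct_sum_smul_mulVec {l m k r : ℕ} (c : Fin l → ℝ)
    (P : Fin l → Matrix (Fin r) (Fin m) ℝ) (N : Fin l → Matrix (Fin r) (Fin k) ℝ)
    (a : Fin m → ℝ) (b : Fin k → ℝ) :
    a ⬝ᵥ ((∑ j, c j • ((P j)ᵀ * N j)) *ᵥ b) = ∑ j, c j * ((P j *ᵥ a) ⬝ᵥ (N j *ᵥ b)) := by
  simp only [sum_mulVec, dotProduct_sum, smul_mulVec, dotProduct_smul, ← mulVec_mulVec,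
    dotProduct_transpose_mulVec_eq, smul_eq_mul]

/-- The running cost augmented by the weighted uncertainty outputs, as one quadratic form in
`(x, u)`. -/
lemma running_cost_eq {n nu nq l : ℕ}
    (K : Fin l → Matrix (Fin nq) (Fin n) ℝ) (G : Fin l → Matrix (Fin nq) (Fin nu) ℝ)
    (Q : Matrix (Fin n) (Fin n) ℝ) (R : Matrix (Fin nu) (Fin nu) ℝ) (τ : Fin l → ℝ)
    (x : Fin n → ℝ) (u : Fin nu → ℝ) :
    x ⬝ᵥ Q *ᵥ x + u ⬝ᵥ R *ᵥ u
        + ∑ j, τ j * ((K j *ᵥ x + G j *ᵥ u) ⬝ᵥ (K j *ᵥ x + G j *ᵥ u))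
      = x ⬝ᵥ (Q + ∑ j, τ j • ((K j)ᵀ * K j)) *ᵥ x
        + 2 * (x ⬝ᵥ (∑ j, τ j • ((K j)ᵀ * G j)) *ᵥ u)
        + u ⬝ᵥ (R + ∑ j, τ j • ((G j)ᵀ * G j)) *ᵥ u := by
  simp only [add_mulVec, dotProduct_add, dotProduct_sum_smul_mulVec, add_dotProduct]
  have h : ∑ j, τ j * (K j *ᵥ x ⬝ᵥ K j *ᵥ x + G j *ᵥ u ⬝ᵥ K j *ᵥ x
        + (K j *ᵥ x ⬝ᵥ G j *ᵥ u + G j *ᵥ u ⬝ᵥ G j *ᵥ u))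
      = ∑ j, τ j * (K j *ᵥ x ⬝ᵥ K j *ᵥ x) + 2 * ∑ j, τ j * (K j *ᵥ x ⬝ᵥ G j *ᵥ u)
        + ∑ j, τ j * (G j *ᵥ u ⬝ᵥ G j *ᵥ u) := by
    rw [Finset.mul_sum, ← Finset.sum_add_distrib, ← Finset.sum_add_distrib]
    refine Finset.sum_congr rfl fun j _ => ?_
    rw [dotProduct_comm (G j *ᵥ u) (K j *ᵥ x)]
    ring
  rw [h]
  ring

/-- Completion of the square in the disturbances: the worst case is `ζ_j = τ_j⁻¹ C_jᵀ y`. -/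
lemma disturbance_le {n nζ l : ℕ} (C : Fin l → Matrix (Fin n) (Fin nζ) ℝ)
    (τ : Fin l → ℝ) (hτ : ∀ j, 0 < τ j) (y : Fin n → ℝ) (ζ : Fin l → Fin nζ → ℝ) :
    2 * (y ⬝ᵥ ∑ j, C j *ᵥ ζ j) - ∑ j, τ j * (ζ j ⬝ᵥ ζ j)
      ≤ y ⬝ᵥ (∑ j, (τ j)⁻¹ • (C j * (C j)ᵀ)) *ᵥ y := by
  have hM := dotProduct_sum_smul_mulVec (fun j => (τ j)⁻¹) (fun j => (C j)ᵀ)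
    (fun j => (C j)ᵀ) y y
  simp only [transpose_transpose] at hM
  rw [hM, dotProduct_sum, Finset.mul_sum, ← Finset.sum_sub_distrib]
  refine Finset.sum_le_sum fun j _ => ?_
  have hadj : y ⬝ᵥ C j *ᵥ ζ j = ((C j)ᵀ *ᵥ y) ⬝ᵥ ζ j := by
    simpa using dotProduct_transpose_mulVec_eq (C j)ᵀ y (ζ j)
  rw [hadj]
  generalize (C j)ᵀ *ᵥ y = v
  simp only [dotProduct, Finset.mul_sum]
  rw [← Finset.sum_sub_distrib]
  refine Finset.sum_le_sum fun i _ => ?_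
  have h0 := hτ j
  have h1 : (τ j)⁻¹ * (v i * v i) - (2 * (v i * ζ j i) - τ j * (ζ j i * ζ j i))
      = (τ j)⁻¹ * (v i - τ j * ζ j i) ^ 2 := by
    field_simp
    ring
  have h2 : 0 ≤ (τ j)⁻¹ * (v i - τ j * ζ j i) ^ 2 := by positivity
  linarith

/-- The Riccati equation evaluated at `x`, where `F` plays the role of `E⁻¹`; the terms
containing `F` combine into its quadratic form at `BᵀXx + Υᵀx`. -/
lemma riccati_quadratic_form {n nu : ℕ} (A S M X : Matrix (Fin n) (Fin n) ℝ)
    (B Υ : Matrix (Fin n) (Fin nu) ℝ) (F : Matrix (Fin nu) (Fin nu) ℝ)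
    (hF : Fᵀ = F) (hX : Xᵀ = X)
    (hRic : (A - B * F * Υᵀ)ᵀ * X + X * (A - B * F * Υᵀ)
        + X * (M - B * F * Bᵀ) * X + (S - Υ * F * Υᵀ) = 0) (x : Fin n → ℝ) :
    2 * ((X *ᵥ x) ⬝ᵥ A *ᵥ x) + (X *ᵥ x) ⬝ᵥ M *ᵥ (X *ᵥ x) + x ⬝ᵥ S *ᵥ x
      = (Bᵀ *ᵥ (X *ᵥ x) + Υᵀ *ᵥ x) ⬝ᵥ F *ᵥ (Bᵀ *ᵥ (X *ᵥ x) + Υᵀ *ᵥ x) := by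
  have h := congrArg (fun N => x ⬝ᵥ N *ᵥ x) hRic
  have hXadj : ∀ b, x ⬝ᵥ X *ᵥ b = (X *ᵥ x) ⬝ᵥ b := fun b => by
    simpa [hX] using dotProduct_transpose_mulVec_eq X x b
  have hFadj : ∀ a b, a ⬝ᵥ F *ᵥ b = b ⬝ᵥ F *ᵥ a := fun a b => by
    rw [dotProduct_comm b, ← dotProduct_transpose_mulVec_eq, hF]
  have hadj : ∀ (P : Matrix (Fin n) (Fin nu) ℝ) a b, a ⬝ᵥ P *ᵥ b = (Pᵀ *ᵥ a) ⬝ᵥ b :=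
    fun P a b => by simpa using dotProduct_transpose_mulVec_eq Pᵀ a b
  simp only [add_mulVec, dotProduct_add, ← mulVec_mulVec, hXadj, dotProduct_transpose_mulVec_eq,
    sub_mulVec, dotProduct_sub, sub_dotProduct, zero_mulVec, dotProduct_zero] at h
  rw [dotProduct_comm (A *ᵥ x), dotProduct_comm (B *ᵥ _)] at h
  simp only [hadj B, hadj Υ] at h
  simp only [mulVec_add, dotProduct_add, add_dotProduct]
  rw [hFadj (Υᵀ *ᵥ x) (Bᵀ *ᵥ (X *ᵥ x))]
  linarith

/-- The pointwise dissipation inequality; `2 (Xx)ᵀẋ` is the derivative of `xᵀXx`. -/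
lemma pointwise_dissipation {n nu nζ nq l : ℕ}
    (A : Matrix (Fin n) (Fin n) ℝ) (B : Matrix (Fin n) (Fin nu) ℝ)
    (C : Fin l → Matrix (Fin n) (Fin nζ) ℝ)
    (K : Fin l → Matrix (Fin nq) (Fin n) ℝ) (G : Fin l → Matrix (Fin nq) (Fin nu) ℝ)
    (Q : Matrix (Fin n) (Fin n) ℝ) (R : Matrix (Fin nu) (Fin nu) ℝ) (hR : R.PosDef)
    (τ : Fin l → ℝ) (hτ : ∀ j, 0 < τ j)
    (E : Matrix (Fin nu) (Fin nu) ℝ) (hE : E = R + ∑ j, τ j • ((G j)ᵀ * G j))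
    (Υ : Matrix (Fin n) (Fin nu) ℝ) (hΥ : Υ = ∑ j, τ j • ((K j)ᵀ * G j))
    (S : Matrix (Fin n) (Fin n) ℝ) (hS : S = Q + ∑ j, τ j • ((K j)ᵀ * K j))
    (M : Matrix (Fin n) (Fin n) ℝ) (hM : M = ∑ j, (τ j)⁻¹ • (C j * (C j)ᵀ))
    (X : Matrix (Fin n) (Fin n) ℝ) (hX : Xᵀ = X)
    (hRic : (A - B * E⁻¹ * Υᵀ)ᵀ * X + X * (A - B * E⁻¹ * Υᵀ)
        + X * (M - B * E⁻¹ * Bᵀ) * X + (S - Υ * E⁻¹ * Υᵀ) = 0)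
    (x : Fin n → ℝ) (u : Fin nu → ℝ) (hu : u = -((E⁻¹ * (Bᵀ * X + Υᵀ)) *ᵥ x))
    (ζ : Fin l → Fin nζ → ℝ) :
    x ⬝ᵥ Q *ᵥ x + u ⬝ᵥ R *ᵥ u
        + ∑ j, τ j * ((K j *ᵥ x + G j *ᵥ u) ⬝ᵥ (K j *ᵥ x + G j *ᵥ u) - ζ j ⬝ᵥ ζ j)
      ≤ -(2 * ((X *ᵥ x) ⬝ᵥ (A *ᵥ x + B *ᵥ u + ∑ j, C j *ᵥ ζ j))) := by
  have hEpos : E.PosDef := by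
    rw [hE]
    refine hR.add_posSemidef (posSemidef_sum _ fun j _ => ?_)
    simpa using (posSemidef_conjTranspose_mul_self (G j)).smul (hτ j).le
  have hEsymm : Eᵀ = E := by simpa using hEpos.isHermitian.eq
  have hFsymm : (E⁻¹)ᵀ = E⁻¹ := by rw [transpose_nonsing_inv, hEsymm]
  have hric := riccati_quadratic_form A S M X B Υ E⁻¹ hFsymm hX hRic x
  have hdist := disturbance_le C τ hτ (X *ᵥ x) ζ
  have hcost := running_cost_eq K G Q R τ x u
  rw [← hE, ← hΥ, ← hS] at hcost
  rw [← hM] at hdist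
  have hEu : E *ᵥ u = -(Bᵀ *ᵥ (X *ᵥ x) + Υᵀ *ᵥ x) := by
    rw [hu, mulVec_neg, mulVec_mulVec, ← Matrix.mul_assoc,
      mul_nonsing_inv _ ((isUnit_iff_isUnit_det _).1 hEpos.isUnit), Matrix.one_mul, add_mulVec,
      ← mulVec_mulVec]
  have hu' : u = -(E⁻¹ *ᵥ (Bᵀ *ᵥ (X *ᵥ x) + Υᵀ *ᵥ x)) := by
    rw [hu, ← mulVec_mulVec, add_mulVec, ← mulVec_mulVec]
  have hadj : ∀ (P : Matrix (Fin n) (Fin nu) ℝ) a b, a ⬝ᵥ P *ᵥ b = (Pᵀ *ᵥ a) ⬝ᵥ b :=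
    fun P a b => by simpa using dotProduct_transpose_mulVec_eq Pᵀ a b
  -- both `uᵀEu` and the gain term of the Riccati equation equal `-(Bᵀy + Υᵀx)ᵀu`, where `y = Xx`
  have hpu : (Bᵀ *ᵥ (X *ᵥ x) + Υᵀ *ᵥ x) ⬝ᵥ E⁻¹ *ᵥ (Bᵀ *ᵥ (X *ᵥ x) + Υᵀ *ᵥ x)
      = -((Bᵀ *ᵥ (X *ᵥ x) + Υᵀ *ᵥ x) ⬝ᵥ u) := by
    conv_rhs => rw [hu', dotProduct_neg, neg_neg]
  rw [hpu] at hric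
  rw [hEu, hadj Υ, dotProduct_neg, dotProduct_comm u (_ + _)] at hcost
  rw [add_dotProduct] at hric hcost
  simp only [mul_sub, Finset.sum_sub_distrib]
  rw [dotProduct_add, dotProduct_add, hadj B]
  linarith

/-- Finite-horizon dissipation inequality for the minimax LQR controller `u = -Gτ x`
along closed-loop trajectories of the uncertain linear system. -/
theorem minimax_lqr_finite_horizon_dissipation
    (n nu nζ nq l : ℕ) (hn : 0 < n) (hnu : 0 < nu) (hnζ : 0 < nζ) (hl : 0 < l)
    (A : Matrix (Fin n) (Fin n) ℝ) (B : Matrix (Fin n) (Fin nu) ℝ)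
    (C : Fin l → Matrix (Fin n) (Fin nζ) ℝ)
    (K : Fin l → Matrix (Fin nq) (Fin n) ℝ)
    (G : Fin l → Matrix (Fin nq) (Fin nu) ℝ)
    (Q : Matrix (Fin n) (Fin n) ℝ) (R : Matrix (Fin nu) (Fin nu) ℝ)
    (hQsymm : Q.IsSymm) (hQ : Q.PosDef) (hRsymm : R.IsSymm) (hR : R.PosDef)
    (τ : Fin l → ℝ) (hτ : ∀ j, 0 < τ j)
    (E : Matrix (Fin nu) (Fin nu) ℝ) (hE : E = R + ∑ j, τ j • ((G j)ᵀ * G j))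
    (Υ : Matrix (Fin n) (Fin nu) ℝ) (hΥ : Υ = ∑ j, τ j • ((K j)ᵀ * G j))
    (S : Matrix (Fin n) (Fin n) ℝ) (hS : S = Q + ∑ j, τ j • ((K j)ᵀ * K j))
    (M : Matrix (Fin n) (Fin n) ℝ) (hM : M = ∑ j, (τ j)⁻¹ • (C j * (C j)ᵀ))
    (X : Matrix (Fin n) (Fin n) ℝ) (hXsymm : X.IsSymm)
    (hRic : (A - B * E⁻¹ * Υᵀ)ᵀ * X + X * (A - B * E⁻¹ * Υᵀ)
        + X * (M - B * E⁻¹ * Bᵀ) * X + (S - Υ * E⁻¹ * Υᵀ) = 0)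
    (Gτ : Matrix (Fin nu) (Fin n) ℝ) (hGτ : Gτ = E⁻¹ * (Bᵀ * X + Υᵀ))
    (x : ℝ → Fin n → ℝ) (ζ : Fin l → ℝ → Fin nζ → ℝ)
    (hζ : ∀ j, ContinuousOn (ζ j) (Set.Ici (0:ℝ)))
    (u : ℝ → Fin nu → ℝ) (hu : ∀ t, u t = -(Gτ.mulVec (x t)))
    (hdyn : ∀ t, 0 ≤ t → HasDerivAt x
        (A.mulVec (x t) + B.mulVec (u t) + ∑ j, (C j).mulVec (ζ j t)) t)
    (z : Fin l → ℝ → Fin nq → ℝ)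
    (hz : ∀ j t, z j t = (K j).mulVec (x t) + (G j).mulVec (u t))
    (T : ℝ) (hT : 0 ≤ T) :
    (∫ t in (0:ℝ)..T, (x t ⬝ᵥ Q.mulVec (x t) + u t ⬝ᵥ R.mulVec (u t)))
      + ∑ j, τ j * ∫ t in (0:ℝ)..T, ((∑ i, (z j t i) ^ 2) - ∑ i, (ζ j t i) ^ 2)
      ≤ x 0 ⬝ᵥ X.mulVec (x 0) - x T ⬝ᵥ X.mulVec (x T) := by
  have hX : Xᵀ = X := hXsymm
  have hIcc : ∀ t ∈ Set.uIcc 0 T, 0 ≤ t := fun t ht => by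
    rw [Set.uIcc_of_le hT] at ht
    exact ht.1
  have hxc : ContinuousOn x (Set.uIcc 0 T) := fun t ht =>
    (hdyn t (hIcc t ht)).continuousAt.continuousWithinAt
  have hmul : ∀ {m k : ℕ} (P : Matrix (Fin m) (Fin k) ℝ) {f : ℝ → Fin k → ℝ},
      ContinuousOn f (Set.uIcc 0 T) → ContinuousOn (fun t => P *ᵥ f t) (Set.uIcc 0 T) :=
    fun P f hf => (Continuous.matrix_mulVec continuous_const continuous_id).comp_continuousOn hf
  have hdot : ∀ {k : ℕ} {f g : ℝ → Fin k → ℝ}, ContinuousOn f (Set.uIcc 0 T) →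
      ContinuousOn g (Set.uIcc 0 T) → ContinuousOn (fun t => f t ⬝ᵥ g t) (Set.uIcc 0 T) :=
    fun hf hg => (Continuous.dotProduct continuous_fst continuous_snd).comp_continuousOn
      (hf.prodMk hg)
  have huc : ContinuousOn u (Set.uIcc 0 T) := by
    rw [funext hu]
    exact (hmul Gτ hxc).neg
  have hζc : ∀ j, ContinuousOn (ζ j) (Set.uIcc 0 T) := fun j => (hζ j).mono hIcc
  have hzc : ∀ j, ContinuousOn (z j) (Set.uIcc 0 T) := fun j => by
    rw [funext (hz j)]
    exact (hmul (K j) hxc).add (hmul (G j) huc)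
  simp only [sum_sq_eq_dotProduct]
  have hint1 : IntervalIntegrable (fun t => x t ⬝ᵥ Q *ᵥ x t + u t ⬝ᵥ R *ᵥ u t) volume 0 T :=
    ((hdot hxc (hmul Q hxc)).add (hdot huc (hmul R huc))).intervalIntegrable
  have hint2 : ∀ j, IntervalIntegrable
      (fun t => τ j * (z j t ⬝ᵥ z j t - ζ j t ⬝ᵥ ζ j t)) volume 0 T := fun j =>
    (continuousOn_const.mul
      ((hdot (hzc j) (hzc j)).sub (hdot (hζc j) (hζc j)))).intervalIntegrable
  have hint2' : IntervalIntegrable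
      (fun t => ∑ j, τ j * (z j t ⬝ᵥ z j t - ζ j t ⬝ᵥ ζ j t)) volume 0 T :=
    (continuousOn_finsetSum _ fun j _ => continuousOn_const.mul
      ((hdot (hzc j) (hzc j)).sub (hdot (hζc j) (hζc j)))).intervalIntegrable
  have hderiv : ∀ t ∈ Set.uIcc 0 T, HasDerivAt (fun s => -(x s ⬝ᵥ X *ᵥ x s))
      (-(2 * ((X *ᵥ x t) ⬝ᵥ (A *ᵥ x t + B *ᵥ u t + ∑ j, C j *ᵥ ζ j t)))) t := by
    intro t ht
    have hd := hdyn t (hIcc t ht)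
    generalize A *ᵥ x t + B *ᵥ u t + ∑ j, C j *ᵥ ζ j t = d at hd ⊢
    have hXd : HasDerivAt (fun s => X *ᵥ x s) (X *ᵥ d) t :=
      (LinearMap.toContinuousLinearMap (mulVecLin X)).hasFDerivAt.comp_hasDerivAt t hd
    have hsum : HasDerivAt (fun s => x s ⬝ᵥ X *ᵥ x s)
        (∑ i, (d i * (X *ᵥ x t) i + x t i * (X *ᵥ d) i)) t :=
      HasDerivAt.fun_sum fun i _ => (hasDerivAt_pi.1 hd i).mul (hasDerivAt_pi.1 hXd i)
    have hval : ∑ i, (d i * (X *ᵥ x t) i + x t i * (X *ᵥ d) i) = 2 * ((X *ᵥ x t) ⬝ᵥ d) := by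
      rw [Finset.sum_add_distrib]
      change d ⬝ᵥ X *ᵥ x t + x t ⬝ᵥ X *ᵥ d = _
      have hadj : x t ⬝ᵥ X *ᵥ d = (X *ᵥ x t) ⬝ᵥ d := by
        simpa [hX] using dotProduct_transpose_mulVec_eq X (x t) d
      rw [hadj, dotProduct_comm d]
      ring
    rw [← hval]
    exact hsum.neg
  have hint3 : IntervalIntegrable (fun t =>
      -(2 * ((X *ᵥ x t) ⬝ᵥ (A *ᵥ x t + B *ᵥ u t + ∑ j, C j *ᵥ ζ j t)))) volume 0 T :=
    (continuousOn_const.mul (hdot (hmul X hxc) (((hmul A hxc).add (hmul B huc)).add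
      (continuousOn_finsetSum _ fun j _ => hmul (C j) (hζc j))))).neg.intervalIntegrable
  have hftc := intervalIntegral.integral_eq_sub_of_hasDerivAt hderiv hint3
  simp only [← intervalIntegral.integral_const_mul]
  rw [← intervalIntegral.integral_finsetSum fun j _ => hint2 j,
    ← intervalIntegral.integral_add hint1 hint2']
  refine (intervalIntegral.integral_mono_on hT (hint1.add hint2') hint3 fun t _ => ?_).trans
    (hftc.trans (by ring)).le
  simp only [hz]
  exact pointwise_dissipation A B C K G Q R hR τ hτ E hE Υ hΥ S hS M hM X hX hRic (x t) (u t)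
    (by rw [hu, hGτ]) (fun j => ζ j t)
end

section
/- Let u_max > 0 and let ε satisfy 0 < ε < 1, and set ū = u_max/(1 − ε). Then for every u ∈ ℝ with |u| ≤ ū, the centered deadzone uncertainty satisfies −(ε·u²)/2 ≤ ŵ(u)·u ≤ (ε·u²)/2. -/
/-!
Multiplying out, the claim is the sector bound `0 ≤ φ(u) * u ≤ ε * u ^ 2` for the deadzone `φ`,
shifted by `ε * u ^ 2 / 2`. Inside the saturation limits `φ` vanishes. Outside them `φ(u)` has
the sign of `u` and absolute value `|u| - umax`, which is at most `ε * |u|` because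
`|u| ≤ umax / (1 - ε)` means `|u| * (1 - ε) ≤ umax`.
-/

/-- The symmetric saturation function with saturation level `umax`. -/
noncomputable def sat (umax u : ℝ) : ℝ := max (-umax) (min u umax)

/-- The deadzone function with saturation level `umax`. -/
noncomputable def dz (umax u : ℝ) : ℝ := u - sat umax u

/-- The centered deadzone uncertainty `ŵ(u) = φ(u) - ε·u/2`. -/
noncomputable def what (umax ε u : ℝ) : ℝ := dz umax u - ε * u / 2

theorem centered_deadzone_sector (umax : ℝ) (humax : 0 < umax) (ε : ℝ) (hε : 0 < ε)
    (hε1 : ε < 1) (ubar : ℝ) (hubar : ubar = umax / (1 - ε)) (u : ℝ) (hu : |u| ≤ ubar) :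
    -(ε * u ^ 2) / 2 ≤ what umax ε u * u ∧ what umax ε u * u ≤ ε * u ^ 2 / 2 := by
  have hsector : 0 ≤ dz umax u * u ∧ dz umax u * u ≤ ε * u ^ 2 := by
    rw [hubar, le_div_iff₀ (by linarith)] at hu
    have hpos : u * (1 - ε) ≤ umax :=
      (mul_le_mul_of_nonneg_right (le_abs_self u) (by linarith)).trans hu
    have hneg : -u * (1 - ε) ≤ umax :=
      (mul_le_mul_of_nonneg_right (neg_le_abs u) (by linarith)).trans hu
    unfold dz sat
    rcases le_total u umax with h | h
    · rw [min_eq_left h]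
      rcases le_total (-umax) u with h' | h'
      · rw [max_eq_right h']
        constructor
        · simp
        · nlinarith [mul_nonneg hε.le (sq_nonneg u)]
      · rw [max_eq_left h']
        constructor <;> nlinarith
    · rw [min_eq_right h, max_eq_right (by linarith)]
      constructor <;> nlinarith
  unfold what
  constructor <;> nlinarith [hsector.1, hsector.2]
end

section
/- Let u_max > 0 and let ε satisfy 0 < ε < 1, and set ū = u_max/(1 − ε). Then for every u ∈ ℝ with |u| ≤ ū, the centered deadzone uncertainty satisfies the norm bound |ŵ(u)| ≤ ε·|u|/2. -/
theorem centered_deadzone_norm_bound (umax : ℝ) (humax : 0 < umax) (ε : ℝ) (hε : 0 < ε)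
    (hε1 : ε < 1) (ubar : ℝ) (hubar : ubar = umax / (1 - ε)) (u : ℝ) (hu : |u| ≤ ubar) :
    |what umax ε u| ≤ ε * |u| / 2 := by
  -- The bound on `u` is used as `(1 - ε) * |u| ≤ umax`, which gives the sector condition
  -- that `dz umax u` lies between `0` and `ε * u`; centering at `ε * u / 2` is then the claim.
  have h : |u| * (1 - ε) ≤ umax := by
    rw [hubar] at hu
    exact (le_div_iff₀ (by linarith)).mp hu
  unfold what dz sat
  rcases le_total 0 u with h0 | h0
  · rw [abs_of_nonneg h0] at h ⊢
    have hεu : 0 ≤ ε * u := mul_nonneg hε.le h0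
    rw [max_eq_right (le_min (by linarith) (by linarith)), abs_le]
    rcases min_cases u umax with ⟨hm, _⟩ | ⟨hm, _⟩ <;> rw [hm] <;> constructor <;> linarith
  · rw [abs_of_nonpos h0] at h ⊢
    have hεu : ε * u ≤ 0 := mul_nonpos_of_nonneg_of_nonpos hε.le h0
    rw [min_eq_left (by linarith), abs_le]
    rcases max_cases (-umax) u with ⟨hm, _⟩ | ⟨hm, _⟩ <;> rw [hm] <;> constructor <;> linarith
end

section
/- Let m be a positive integer and for each i = 1,…,m let u_max_i > 0 and 0 < ε_i < 1, with restricted bounds ū_i = u_max_i/(1 − ε_i). Let u ∈ ℝ^m satisfy |u_i| ≤ ū_i for every i. Then the componentwise centered deadzone uncertainty vector ŵ(u) = (ŵ_1(u_1), …, ŵ_m(u_m)) satisfies the Euclidean norm bound ‖ŵ(u)‖ ≤ ‖Ḡ u‖, where Ḡ is the diagonal matrix with diagonal entries ε_i/2; equivalently, Σ_{i=1}^m ŵ_i(u_i)² ≤ Σ_{i=1}^m (ε_i·u_i/2)². -/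
/-- Sector condition: on `|u| ≤ umax / (1 - ε)` the deadzone lies between `0` and `ε * u`, so its
distance to the midpoint `ε * u / 2` is at most the half-width `|ε * u| / 2`. -/
theorem what_sq_le (umax ε u : ℝ) (hm : 0 < umax) (h1 : ε < 1)
    (hu : |u| ≤ umax / (1 - ε)) : what umax ε u ^ 2 ≤ (ε / 2 * u) ^ 2 := by
  rw [le_div_iff₀ (by linarith)] at hu
  -- The bound is equivalent to `φ * (φ - ε * u) ≤ 0`, where `φ` is the deadzone.
  suffices h : dz umax u * (dz umax u - ε * u) ≤ 0 by
    unfold what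
    nlinarith
  unfold dz sat
  rcases le_total u umax with h | h
  · rcases le_total (-umax) u with h' | h'
    · rw [min_eq_left h, max_eq_right h']
      simp
    · rw [min_eq_left h, max_eq_left h']
      rw [abs_of_nonpos (by linarith)] at hu
      exact mul_nonpos_of_nonpos_of_nonneg (by linarith) (by linarith)
  · rw [min_eq_right h, max_eq_right (by linarith)]
    rw [abs_of_nonneg (by linarith)] at hu
    exact mul_nonpos_of_nonneg_of_nonpos (by linarith) (by linarith)

theorem centered_deadzone_vector_norm_bound (m : ℕ) (hm : 0 < m)
    (umax ε : Fin m → ℝ) (humax : ∀ i, 0 < umax i)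
    (hε : ∀ i, 0 < ε i) (hε1 : ∀ i, ε i < 1)
    (ubar : Fin m → ℝ) (hubar : ∀ i, ubar i = umax i / (1 - ε i))
    (u : Fin m → ℝ) (hu : ∀ i, |u i| ≤ ubar i)
    (w : Fin m → ℝ) (hw : ∀ i, w i = what (umax i) (ε i) (u i))
    (Gbar : Matrix (Fin m) (Fin m) ℝ)
    (hGbar : Gbar = Matrix.diagonal (fun i => ε i / 2)) :
    ∑ i, (w i) ^ 2 ≤ ∑ i, (Gbar.mulVec u i) ^ 2 := by
  subst hGbar
  refine Finset.sum_le_sum fun i _ => ?_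
  rw [hw, Matrix.mulVec_diagonal]
  exact what_sq_le _ _ _ (humax i) (hε1 i) (hubar i ▸ hu i)
end

section
/- Let m be a positive integer and for each i = 1,…,m let u_max_i > 0 and 0 < ε_i < 1, with restricted bounds ū_i = u_max_i/(1 − ε_i). Let T ≥ 0 and let u : ℝ → ℝ^m be measurable with |u_i(t)| ≤ ū_i for almost every t ∈ [0, T] and every i. Then the saturation uncertainty satisfies the integral quadratic constraint with zero offset: ∫₀^T ( Σ_{i=1}^m (ε_i·u_i(t)/2)² − Σ_{i=1}^m ŵ_i(u_i(t))² ) dt ≥ 0; that is, the time integral of the squared uncertainty output ‖Ḡ u(t)‖² dominates that of the squared uncertainty input ‖ŵ(u(t))‖², where Ḡ is the diagonal matrix with diagonal entries ε_i/2. -/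
/-!
Writing `φ` for the deadzone, `(ε u / 2)² - ŵ(u)² = φ(u) (ε u - φ(u))`, so the integrand is
nonnegative as soon as `φ(u)` lies in the sector between `0` and `ε u`. This sector condition holds
whenever `(1 - ε) |u| ≤ umax`, i.e. on the restricted domain; it is the content of
`sq_what_le`. Integrating the almost-everywhere pointwise inequality gives the constraint.
-/

open MeasureTheory

/-- The pointwise sector bound: for `(1 - ε) |u| ≤ umax` the deadzone lies between `0` and `ε u`,
hence the centered uncertainty is dominated by `ε u / 2`. -/
theorem sq_what_le {umax ε u : ℝ} (humax : 0 < umax)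
    (hu : (1 - ε) * |u| ≤ umax) : (what umax ε u) ^ 2 ≤ (ε * u / 2) ^ 2 := by
  suffices h : 0 ≤ dz umax u * (ε * u - dz umax u) by
    unfold what
    nlinarith
  unfold dz sat
  rcases le_total u umax with h1 | h1
  · rw [min_eq_left h1]
    rcases le_total (-umax) u with h2 | h2
    · simp [max_eq_right h2]
    · rw [max_eq_left h2]
      rw [abs_of_nonpos (by linarith)] at hu
      exact mul_nonneg_of_nonpos_of_nonpos (by linarith) (by linarith)
  · rw [min_eq_right h1, max_eq_right (by linarith)]
    rw [abs_of_nonneg (by linarith)] at hu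
    exact mul_nonneg (by linarith) (by linarith)

theorem saturation_uncertainty_IQC (m : ℕ) (hm : 0 < m)
    (umax ε : Fin m → ℝ) (humax : ∀ i, 0 < umax i)
    (hε : ∀ i, 0 < ε i) (hε1 : ∀ i, ε i < 1)
    (ubar : Fin m → ℝ) (hubar : ∀ i, ubar i = umax i / (1 - ε i))
    (T : ℝ) (hT : 0 ≤ T)
    (u : ℝ → Fin m → ℝ) (humeas : Measurable u)
    (hu : ∀ᵐ t ∂(volume.restrict (Set.Icc (0:ℝ) T)), ∀ i, |u t i| ≤ ubar i) :
    0 ≤ ∫ t in (0:ℝ)..T,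
        ((∑ i, (ε i * u t i / 2) ^ 2) - ∑ i, (what (umax i) (ε i) (u t i)) ^ 2) := by
  refine intervalIntegral.integral_nonneg_of_ae_restrict hT ?_
  filter_upwards [hu] with t ht
  refine sub_nonneg.mpr (Finset.sum_le_sum fun i _ => sq_what_le (humax i) ?_)
  have h := ht i
  rw [hubar i, le_div_iff₀ (sub_pos.mpr (hε1 i))] at h
  linarith
end
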